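/- A continuous function f on the unit circle bΔ extends continuously to the closed unit disc so as to be holomorphic on the open disc if and only if: for every polynomial P such that f + P is nonvanishing on bΔ, the winding number of f + P around 0 is nonnegative. -/

import Mathlib

open Polynomial Metric
open scoped Classical

/-- `g` (restricted to the unit circle) has winding number `n` around `0`:
there is a continuous argument lift `α` along `θ ↦ g (exp (iθ))` whose total
increase over `[0, 2π]` is `2πn`. -/
def HasWindingNumber (g : ℂ → ℂ) (n : ℤ) : Prop :=
  ∃ α : ℝ → ℝ, Continuous α ∧
    (∀ θ : ℝ, g (Complex.exp (θ * Complex.I)) =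
      (‖g (Complex.exp (θ * Complex.I))‖ : ℂ) * Complex.exp (α θ * Complex.I)) ∧
    α (2 * Real.pi) - α 0 = n * (2 * Real.pi)

/-- `f` on the unit circle extends continuously to the closed unit disc,
holomorphically on the open unit disc. -/
def ExtendsHolo (f : ℂ → ℂ) : Prop :=
  ∃ F : ℂ → ℂ, ContinuousOn F (closedBall 0 1) ∧
    DifferentiableOn ℂ F (ball 0 1) ∧ ∀ z ∈ sphere (0:ℂ) 1, F z = f z

/-- Multiplicity of a zero of a (holomorphic) function: least `n` with
nonvanishing `n`-th derivative. -/
noncomputable def holoOrder (f : ℂ → ℂ) (z : ℂ) : ℕ :=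
  sInf {n | iteratedDeriv n f z ≠ 0}

/-!
If `f` extends holomorphically, then `f + P` is uniformly approximated on the circle by
polynomials. A small perturbation does not change the winding number, and the winding number of a
polynomial is the number of its zeros in the open disc, which is nonnegative.

Conversely, approximate `f` on the circle by `p z / z ^ n`. Let `T` be multiplication by `X * p`
modulo `X ^ (n + 1)` on coefficient vectors, and let `v` be the image `T x` of a maximal vector `x`
of `T`. Then `‖v z‖ = ‖T‖ * ‖x z‖` on the circle, and after the choice of an `x` of minimal degree
and the removal of common factors of `v` and `x`, the polynomial `x` has no zero in the closed disc
(Carathéodory–Fejér). Hence `v z / (z ^ (n + 1) * x z)` differs from `p z / z ^ n` by a function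
holomorphic near the closed disc; it has constant modulus `‖T‖`, and negative winding number
because `v` has at most `n` zeros. So some `f + P` is uniformly close to a function of constant
modulus `‖T‖` and negative winding number. The hypothesis on `f` then forces `‖T‖` to be small, so
`f` is uniformly close to the polynomial `-P`, and uniform limits of polynomials on the circle
extend holomorphically by the maximum principle.
-/

open ContinuousLinearMap (adjoint adjoint_inner_left)
open scoped ComplexConjugate InnerProductSpace

section MaximalVectors

variable {𝕜 E F : Type*} [RCLike 𝕜] [NormedAddCommGroup E] [InnerProductSpace 𝕜 E]
  [NormedAddCommGroup F] [InnerProductSpace 𝕜 F]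

theorem norm_sub_smul_sq (a : 𝕜) (u w : E) :
    ‖u - a • w‖ ^ 2 =
      ‖w - conj a • u‖ ^ 2 - (1 - ‖a‖ ^ 2) * (‖w‖ ^ 2 - ‖u‖ ^ 2) := by
  have hre : RCLike.re ⟪w, conj a • u⟫_𝕜 = RCLike.re ⟪u, a • w⟫_𝕜 := by
    rw [← inner_conj_symm, RCLike.conj_re, inner_smul_left, inner_smul_right, RCLike.conj_conj]
  rw [@norm_sub_sq 𝕜, @norm_sub_sq 𝕜 _ _ _ _ w, hre, norm_smul, norm_smul, RCLike.norm_conj]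
  ring

theorem norm_sq_sub_norm_sq_eq {c : 𝕜} (hc : ‖c‖ = 1) (u w : E) :
    ‖w‖ ^ 2 - ‖u‖ ^ 2 = 2 * RCLike.re ⟪w - c • u, w⟫_𝕜 - ‖w - c • u‖ ^ 2 := by
  have h := @norm_sub_sq 𝕜 _ _ _ _ w (w - c • u)
  rw [sub_sub_cancel, norm_smul, hc, one_mul, inner_re_symm] at h
  linear_combination -h

variable [CompleteSpace E] [CompleteSpace F]

/-- The subspace of maximal vectors of a bounded operator `T` between Hilbert spaces, i.e. of the
`x` with `‖T x‖ = ‖T‖ * ‖x‖`. Encoding it as the eigenspace of `T† T` for the eigenvalue `‖T‖ ^ 2`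
makes it a subspace by construction. -/
noncomputable def maximalVectors (T : E →L[𝕜] F) :
    Submodule 𝕜 E :=
  Module.End.eigenspace (adjoint T ∘L T : E →L[𝕜] E) ((‖T‖ : 𝕜) ^ 2)

theorem inner_map_map_of_mem_maximalVectors {T : E →L[𝕜] F}
    {x : E} (hx : x ∈ maximalVectors T) (y : E) : ⟪T x, T y⟫_𝕜 = (‖T‖ : 𝕜) ^ 2 * ⟪x, y⟫_𝕜 := by
  have hTx : adjoint T (T x) = (‖T‖ : 𝕜) ^ 2 • x := Module.End.mem_eigenspace_iff.1 hx
  rw [← adjoint_inner_left, hTx, inner_smul_left]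
  simp

theorem mem_maximalVectors_iff {T : E →L[𝕜] F} {x : E} :
    x ∈ maximalVectors T ↔ ‖T x‖ = ‖T‖ * ‖x‖ := by
  constructor <;> intro hx
  · have h := inner_map_map_of_mem_maximalVectors hx x
    rw [inner_self_eq_norm_sq_to_K, inner_self_eq_norm_sq_to_K, ← mul_pow] at h
    exact (pow_left_inj₀ (by positivity) (by positivity) two_ne_zero).1 (mod_cast h)
  · have hle : ‖adjoint T (T x)‖ ≤ ‖T‖ * ‖T x‖ := by
      simpa only [LinearIsometryEquiv.norm_map] using (adjoint T).le_opNorm (T x)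
    have hre : RCLike.re ⟪adjoint T (T x), (‖T‖ : 𝕜) ^ 2 • x⟫_𝕜 = ‖T‖ ^ 2 * ‖T x‖ ^ 2 := by
      rw [inner_smul_right, adjoint_inner_left, inner_self_eq_norm_sq_to_K]
      norm_cast
    have hsub : ‖adjoint T (T x) - (‖T‖ : 𝕜) ^ 2 • x‖ ^ 2 ≤ 0 := by
      rw [@norm_sub_sq 𝕜, hre, norm_smul, norm_pow, RCLike.norm_ofReal, abs_norm]
      calc ‖adjoint T (T x)‖ ^ 2 - 2 * (‖T‖ ^ 2 * ‖T x‖ ^ 2) + (‖T‖ ^ 2 * ‖x‖) ^ 2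
          ≤ (‖T‖ * ‖T x‖) ^ 2 - 2 * (‖T‖ ^ 2 * ‖T x‖ ^ 2) + (‖T‖ ^ 2 * ‖x‖) ^ 2 := by gcongr
        _ = 0 := by rw [hx]; ring
    refine Module.End.mem_eigenspace_iff.2 (sub_eq_zero.1 (norm_eq_zero.1 ?_))
    exact pow_eq_zero_iff two_ne_zero |>.1 (le_antisymm hsub (sq_nonneg _))

theorem exists_ne_zero_mem_maximalVectors [FiniteDimensional 𝕜 E] [Nontrivial E]
    (T : E →L[𝕜] F) : ∃ x ≠ 0, x ∈ maximalVectors T := by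
  have := FiniteDimensional.proper 𝕜 E
  let := NormedSpace.restrictScalars ℝ 𝕜 E
  obtain ⟨x, hx, hmax⟩ := (isCompact_sphere (0 : E) 1).exists_isMaxOn
    (NormedSpace.sphere_nonempty.2 zero_le_one) T.continuous.norm.continuousOn
  rw [mem_sphere_zero_iff_norm] at hx
  refine ⟨x, norm_ne_zero_iff.1 (hx ▸ one_ne_zero), mem_maximalVectors_iff.2 ?_⟩
  refine le_antisymm (T.le_opNorm x) ?_
  rw [hx, mul_one]
  exact T.opNorm_le_of_unit_norm (norm_nonneg _) fun y hy => hmax (mem_sphere_zero_iff_norm.2 hy)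

variable {S T : E →L[𝕜] E}

/-- The vectors `x = S k - a k` and `y = k - ā S k` have the same norm, while `‖T x‖ ≤ ‖T y‖`
because `S` is a contraction; hence `y` is maximal as well, and `(1 - ‖a‖²) k = y + ā x`. -/
theorem mem_maximalVectors_of_map_sub_smul_mem (hTS : Commute T S) (hS : ∀ u, ‖S u‖ ≤ ‖u‖)
    {a : 𝕜} (ha : ‖a‖ < 1) {k : E} (hk : ‖S k‖ = ‖k‖)
    (hmem : S k - a • k ∈ maximalVectors T) : k ∈ maximalVectors T := by
  have hcomm : T (S k) = S (T k) := DFunLike.congr_fun hTS.eq k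
  have ha' : 0 < 1 - ‖a‖ ^ 2 := by nlinarith [norm_nonneg a]
  have hnorm : ‖S k - a • k‖ = ‖k - conj a • S k‖ := by
    rw [← sq_eq_sq₀ (norm_nonneg _) (norm_nonneg _), norm_sub_smul_sq, hk]
    ring
  have hle : ‖T (S k - a • k)‖ ≤ ‖T (k - conj a • S k)‖ := by
    rw [← sq_le_sq₀ (norm_nonneg _) (norm_nonneg _)]
    simp only [map_sub, map_smul, hcomm]
    rw [norm_sub_smul_sq, sub_le_self_iff]
    exact mul_nonneg ha'.le (sub_nonneg.2 (pow_le_pow_left₀ (norm_nonneg _) (hS _) 2))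
  have hmem' : k - conj a • S k ∈ maximalVectors T := mem_maximalVectors_iff.2 <|
    le_antisymm (T.le_opNorm _) (by rwa [← hnorm, ← mem_maximalVectors_iff.1 hmem])
  have hcomb : (1 - conj a * a) • k = k - conj a • S k + conj a • (S k - a • k) := by module
  have hne : 1 - conj a * a ≠ 0 := by
    rw [RCLike.conj_mul]
    exact mod_cast ha'.ne'
  rw [← Submodule.smul_mem_iff _ hne, hcomb]
  exact add_mem hmem' (Submodule.smul_mem _ _ hmem)

theorem norm_sq_sub_norm_sq_map_eq_of_sub_smul_mem (hTS : Commute T S) {c : 𝕜} (hc : ‖c‖ = 1)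
    {k : E} (hmem : k - c • S k ∈ maximalVectors T) :
    ‖T k‖ ^ 2 - ‖S (T k)‖ ^ 2 = ‖T‖ ^ 2 * (‖k‖ ^ 2 - ‖S k‖ ^ 2) := by
  have hcomm : T (S k) = S (T k) := DFunLike.congr_fun hTS.eq k
  have hT : T k - c • S (T k) = T (k - c • S k) := by rw [map_sub, map_smul, hcomm]
  rw [norm_sq_sub_norm_sq_eq hc, norm_sq_sub_norm_sq_eq hc, hT,
    inner_map_map_of_mem_maximalVectors hmem, mem_maximalVectors_iff.1 hmem]
  have hre : RCLike.re ((‖T‖ : 𝕜) ^ 2 * ⟪k - c • S k, k⟫_𝕜) =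
      ‖T‖ ^ 2 * RCLike.re ⟪k - c • S k, k⟫_𝕜 := by
    rw [← RCLike.ofReal_pow, RCLike.re_ofReal_mul]
  rw [hre]
  ring

end MaximalVectors

section TruncatedMultiplication

variable {𝕜 : Type*} [RCLike 𝕜]

/-- The first `n` coefficients of a polynomial as a vector of the Hilbert space `𝕜ⁿ`. -/
noncomputable def coeffVec (n : ℕ) : 𝕜[X] →ₗ[𝕜] EuclideanSpace 𝕜 (Fin n) :=
  (WithLp.linearEquiv 2 𝕜 (Fin n → 𝕜)).symm ∘ₗ toFn n

@[simp]
theorem coeffVec_apply {n : ℕ} (y : 𝕜[X]) (i : Fin n) : coeffVec n y i = y.coeff i := rfl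

theorem coeffVec_eq_zero_iff {n : ℕ} {y : 𝕜[X]} : coeffVec n y = 0 ↔ X ^ n ∣ y := by
  rw [X_pow_dvd_iff, PiLp.ext_iff, Fin.forall_iff]
  rfl

theorem coeffVec_eq_coeffVec_iff {n : ℕ} {y y' : 𝕜[X]} :
    coeffVec n y = coeffVec n y' ↔ X ^ n ∣ y - y' := by
  rw [← coeffVec_eq_zero_iff, map_sub, sub_eq_zero]

theorem coeffVec_ofFn {n : ℕ} (u : EuclideanSpace 𝕜 (Fin n)) : coeffVec n (ofFn n u) = u := by
  ext i
  exact ofFn_coeff_eq_val_of_lt _ i.2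

theorem norm_coeffVec_succ_sq (n : ℕ) (y : 𝕜[X]) :
    ‖coeffVec (n + 1) y‖ ^ 2 = ‖coeffVec n y‖ ^ 2 + ‖y.coeff n‖ ^ 2 := by
  simp [EuclideanSpace.norm_sq_eq, Fin.sum_univ_castSucc]

theorem norm_coeffVec_succ_X_mul (n : ℕ) (y : 𝕜[X]) :
    ‖coeffVec (n + 1) (X * y)‖ = ‖coeffVec n y‖ := by
  rw [← sq_eq_sq₀ (norm_nonneg _) (norm_nonneg _)]
  simp [EuclideanSpace.norm_sq_eq, Fin.sum_univ_succ]

/-- Multiplication by the polynomial `p` modulo `X ^ n`, as an operator on the Hilbert space `𝕜ⁿ`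
of coefficient vectors: the lower triangular Toeplitz matrix of `p`. -/
noncomputable def truncMul (n : ℕ) (p : 𝕜[X]) :
    EuclideanSpace 𝕜 (Fin n) →L[𝕜] EuclideanSpace 𝕜 (Fin n) :=
  LinearMap.toContinuousLinearMap
    (coeffVec n ∘ₗ LinearMap.mulLeft 𝕜 p ∘ₗ ofFn n ∘ₗ (WithLp.linearEquiv 2 𝕜 _).toLinearMap)

@[simp]
theorem truncMul_coeffVec (n : ℕ) (p y : 𝕜[X]) :
    truncMul n p (coeffVec n y) = coeffVec n (p * y) := by
  have hdvd := coeffVec_eq_coeffVec_iff.1 (coeffVec_ofFn (coeffVec n y))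
  exact coeffVec_eq_coeffVec_iff.2 (mul_sub p _ y ▸ hdvd.mul_left p)

theorem commute_truncMul (n : ℕ) (p q : 𝕜[X]) : Commute (truncMul n p) (truncMul n q) := by
  ext1 u
  rw [← coeffVec_ofFn u]
  simp [mul_left_comm]

theorem norm_sq_sub_norm_sq_truncMul_X (n : ℕ) (y : 𝕜[X]) :
    ‖coeffVec (n + 1) y‖ ^ 2 - ‖truncMul (n + 1) X (coeffVec (n + 1) y)‖ ^ 2 =
      ‖y.coeff n‖ ^ 2 := by
  rw [truncMul_coeffVec, norm_coeffVec_succ_X_mul, norm_coeffVec_succ_sq, add_sub_cancel_left]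

theorem norm_truncMul_X_le (n : ℕ) (u : EuclideanSpace 𝕜 (Fin (n + 1))) :
    ‖truncMul (n + 1) X u‖ ≤ ‖u‖ := by
  rw [← sq_le_sq₀ (norm_nonneg _) (norm_nonneg _), ← sub_nonneg, ← coeffVec_ofFn u,
    norm_sq_sub_norm_sq_truncMul_X]
  positivity

theorem norm_truncMul_X_coeffVec {n : ℕ} {y : 𝕜[X]} (hy : y.coeff n = 0) :
    ‖truncMul (n + 1) X (coeffVec (n + 1) y)‖ = ‖coeffVec (n + 1) y‖ := by
  have h := norm_sq_sub_norm_sq_truncMul_X n y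
  rw [hy, norm_zero, zero_pow two_ne_zero, sub_eq_zero] at h
  exact ((sq_eq_sq₀ (norm_nonneg _) (norm_nonneg _)).1 h).symm

/-- The witness is a nonzero maximal vector of minimal degree: a zero in the open disc could be
divided out. -/
theorem exists_mem_maximalVectors_truncMul (n : ℕ) (p : 𝕜[X]) :
    ∃ x : 𝕜[X], x.natDegree ≤ n ∧
      coeffVec (n + 1) x ∈ maximalVectors (truncMul (n + 1) p) ∧
      ∀ z ∈ ball (0 : 𝕜) 1, x.eval z ≠ 0 := by
  obtain ⟨u, hu0, hu⟩ := exists_ne_zero_mem_maximalVectors (truncMul (n + 1) p)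
  obtain ⟨x, ⟨hx0, hdeg, hx⟩, hmin⟩ := exists_minimalFor_of_wellFoundedLT
    (fun x : 𝕜[X] => x ≠ 0 ∧ x.natDegree ≤ n ∧
      coeffVec (n + 1) x ∈ maximalVectors (truncMul (n + 1) p)) natDegree
    ⟨ofFn (n + 1) u, fun h => hu0 (by rw [← coeffVec_ofFn u, h, map_zero]),
      Nat.lt_succ_iff.1 (ofFn_natDegree_lt n.succ_pos _), by rwa [coeffVec_ofFn]⟩
  refine ⟨x, hdeg, hx, fun a ha hxa => ?_⟩
  obtain ⟨k, rfl⟩ := dvd_iff_isRoot.2 hxa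
  have hk0 : k ≠ 0 := right_ne_zero_of_mul hx0
  have hkd : ((X - C a) * k).natDegree = k.natDegree + 1 := by
    rw [(monic_X_sub_C a).natDegree_mul' hk0, natDegree_X_sub_C, add_comm]
  have hcoeff : k.coeff n = 0 := coeff_eq_zero_of_natDegree_lt (by lia)
  have hk : coeffVec (n + 1) k ∈ maximalVectors (truncMul (n + 1) p) := by
    refine mem_maximalVectors_of_map_sub_smul_mem (commute_truncMul _ p X) (norm_truncMul_X_le n)
      (mem_ball_zero_iff.1 ha) (norm_truncMul_X_coeffVec hcoeff) ?_
    rwa [truncMul_coeffVec, ← map_smul, ← map_sub, smul_eq_C_mul, ← sub_mul]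
  have := hmin ⟨hk0, by lia, hk⟩ (by lia)
  lia

/-- The first `n + 1` terms of the geometric series `∑ cⁱ Xⁱ`, the inverse of `1 - c X` modulo
`X ^ (n + 1)`. -/
noncomputable def truncGeom (n : ℕ) (c : 𝕜) : 𝕜[X] :=
  ∑ i ∈ Finset.range (n + 1), (C c * X) ^ i

theorem coeffVec_sub_smul_truncMul_X (n : ℕ) (c : 𝕜) (y : 𝕜[X]) :
    coeffVec (n + 1) (truncGeom n c * y) -
      c • truncMul (n + 1) X (coeffVec (n + 1) (truncGeom n c * y)) = coeffVec (n + 1) y := by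
  rw [truncMul_coeffVec, ← map_smul, ← map_sub, coeffVec_eq_coeffVec_iff, smul_eq_C_mul]
  have hgeom : (1 - C c * X) * truncGeom n c = 1 - (C c * X) ^ (n + 1) := mul_neg_geom_sum _ _
  exact ⟨-(C c ^ (n + 1) * y), by linear_combination y * hgeom⟩

theorem coeff_truncGeom {n i : ℕ} (hi : i ≤ n) (c : 𝕜) : (truncGeom n c).coeff i = c ^ i := by
  simp_rw [truncGeom, mul_pow, ← C_pow, finsetSum_coeff, coeff_C_mul_X_pow]
  rw [Finset.sum_ite_eq, if_pos (Finset.mem_range_succ_iff.2 hi)]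

theorem norm_coeff_truncGeom_mul {n : ℕ} {z : 𝕜} (hz : ‖z‖ = 1) {y : 𝕜[X]}
    (hy : y.natDegree ≤ n) : ‖(truncGeom n z⁻¹ * y).coeff n‖ = ‖y.eval z‖ := by
  have hz0 : z ≠ 0 := norm_ne_zero_iff.1 (hz ▸ one_ne_zero)
  have hcoeff : (truncGeom n z⁻¹ * y).coeff n = z⁻¹ ^ n * y.eval z := by
    rw [mul_comm, coeff_mul, Finset.Nat.sum_antidiagonal_eq_sum_range_succ_mk,
      eval_eq_sum_range' (Nat.lt_succ_of_le hy), Finset.mul_sum]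
    refine Finset.sum_congr rfl fun i hi => ?_
    have hin : i ≤ n := Nat.lt_succ_iff.1 (Finset.mem_range.1 hi)
    rw [coeff_truncGeom (Nat.sub_le n i), inv_pow, inv_pow, pow_sub₀ _ hz0 hin]
    field_simp
  rw [hcoeff, norm_mul, norm_pow, norm_inv, hz, inv_one, one_pow, one_mul]

theorem norm_eval_eq_of_mem_maximalVectors {n : ℕ} {p x v : 𝕜[X]}
    (hx : coeffVec (n + 1) x ∈ maximalVectors (truncMul (n + 1) p))
    (hxv : coeffVec (n + 1) v = coeffVec (n + 1) (p * x)) (hxd : x.natDegree ≤ n)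
    (hvd : v.natDegree ≤ n) {z : 𝕜} (hz : ‖z‖ = 1) :
    ‖v.eval z‖ = ‖truncMul (n + 1) p‖ * ‖x.eval z‖ := by
  have hv : truncMul (n + 1) p (coeffVec (n + 1) (truncGeom n z⁻¹ * x)) =
      coeffVec (n + 1) (truncGeom n z⁻¹ * v) := by
    rw [truncMul_coeffVec, mul_left_comm, ← truncMul_coeffVec, ← hxv, truncMul_coeffVec]
  have h := norm_sq_sub_norm_sq_map_eq_of_sub_smul_mem (commute_truncMul _ p X)
    (c := z⁻¹) (by rw [norm_inv, hz, inv_one])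
    (by rwa [coeffVec_sub_smul_truncMul_X n z⁻¹ x])
  rw [hv, norm_sq_sub_norm_sq_truncMul_X, norm_sq_sub_norm_sq_truncMul_X,
    norm_coeff_truncGeom_mul hz hvd, norm_coeff_truncGeom_mul hz hxd, ← mul_pow] at h
  exact (sq_eq_sq₀ (norm_nonneg _) (by positivity)).1 h

end TruncatedMultiplication

section CaratheodoryFejer

theorem subset_closure_sdiff_of_preperfect {X : Type*} [TopologicalSpace X] [T1Space X]
    {U s : Set X} (hU : Preperfect U) (hs : s.Finite) : U ⊆ closure (U \ s) := by
  refine fun x hx => mem_closure_iff_nhds.2 fun V hV => ?_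
  have hinf : (V ∩ U).Infinite := .of_accPt ((hU x hx).nhds_inter hV)
  rw [← Set.inter_sdiff_assoc]
  exact (hinf.sdiff hs).nonempty

theorem preperfect_sphere {E : Type*} [NormedAddCommGroup E] [NormedSpace ℝ E]
    (hE : 1 < Module.rank ℝ E) (x : E) {r : ℝ} (hr : 0 < r) : Preperfect (sphere x r) := by
  have : Nontrivial E := rank_pos_iff_nontrivial.1 (zero_lt_one.trans hE)
  obtain ⟨v, hv⟩ := exists_norm_eq E hr.le
  have hv0 : v ≠ 0 := norm_ne_zero_iff.1 (hv ▸ hr.ne')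
  refine (isPreconnected_sphere hE x r).preperfect_of_nontrivial
    ⟨x + v, by simp [hv], x - v, by simp [hv], fun h => hv0 ?_⟩
  have h2v : (2 : ℝ) • v = 0 := by linear_combination (norm := module) h
  exact (smul_eq_zero_iff_right two_ne_zero).1 h2v

theorem norm_eval_eq_of_norm_eval_mul_eq {g v x : ℂ[X]} {s : ℝ} (hg : g ≠ 0)
    (h : ∀ z ∈ sphere (0 : ℂ) 1, ‖(g * v).eval z‖ = s * ‖(g * x).eval z‖) :
    ∀ z ∈ sphere (0 : ℂ) 1, ‖v.eval z‖ = s * ‖x.eval z‖ := by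
  have hrank : 1 < Module.rank ℝ ℂ := by rw [Complex.rank_real_complex]; norm_num
  refine Set.EqOn.of_subset_closure (s := sphere 0 1 \ {z | g.IsRoot z}) (fun z hz => ?_)
    (by fun_prop) (by fun_prop) Set.sdiff_subset (subset_closure_sdiff_of_preperfect
      (preperfect_sphere hrank 0 one_pos) (finite_setOfPred_isRoot hg))
  have hgz : ‖g.eval z‖ ≠ 0 := norm_ne_zero_iff.2 hz.2
  have hz' := h z hz.1
  rw [eval_mul, eval_mul, norm_mul, norm_mul, mul_left_comm] at hz'
  exact mul_left_cancel₀ hgz hz'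

theorem caratheodory_fejer (n : ℕ) (p : ℂ[X]) : ∃ (s : ℝ) (x v : ℂ[X]),
    (∀ z ∈ closedBall (0 : ℂ) 1, x.eval z ≠ 0) ∧ v.natDegree ≤ n ∧ X ^ (n + 1) ∣ v - p * x ∧
    ∀ z ∈ sphere (0 : ℂ) 1, ‖v.eval z‖ = s * ‖x.eval z‖ := by
  obtain ⟨x₀, hx₀d, hx₀, hx₀z⟩ := exists_mem_maximalVectors_truncMul n p
  have hx₀0 : x₀ ≠ 0 := fun h => hx₀z 0 (mem_ball_self one_pos) (by rw [h, eval_zero])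
  let v₀ := ofFn (n + 1) (coeffVec (n + 1) (p * x₀))
  have hv₀d : v₀.natDegree ≤ n := Nat.lt_succ_iff.1 (ofFn_natDegree_lt n.succ_pos _)
  have hv₀ : coeffVec (n + 1) v₀ = coeffVec (n + 1) (p * x₀) := coeffVec_ofFn _
  have hnorm₀ : ∀ z ∈ sphere (0 : ℂ) 1, ‖v₀.eval z‖ = ‖truncMul (n + 1) p‖ * ‖x₀.eval z‖ :=
    fun z hz => norm_eval_eq_of_mem_maximalVectors hx₀ hv₀ hx₀d hv₀d
      (mem_sphere_zero_iff_norm.1 hz)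
  obtain ⟨v, x, g, hrel, hgv, hgx⟩ := UniqueFactorizationMonoid.exists_reduced_factors' v₀ x₀ hx₀0
  rw [← hgv, ← hgx] at hnorm₀
  have hg0 : g ≠ 0 := left_ne_zero_of_mul (hgx ▸ hx₀0)
  have hnorm := norm_eval_eq_of_norm_eval_mul_eq hg0 hnorm₀
  refine ⟨‖truncMul (n + 1) p‖, x, v, fun a ha hxa => ?_, ?_, ?_, hnorm⟩
  · have ha' : a ∈ sphere (0 : ℂ) 1 := by
      refine (mem_closedBall.1 ha).eq_of_not_lt fun hlt => hx₀z a hlt ?_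
      rw [← hgx, eval_mul, hxa, mul_zero]
    have hva : v.eval a = 0 := norm_eq_zero.1 (by rw [hnorm a ha', hxa, norm_zero, mul_zero])
    exact not_isUnit_X_sub_C a (hrel (dvd_iff_isRoot.2 hva) (dvd_iff_isRoot.2 hxa))
  · rcases eq_or_ne v 0 with rfl | hv0
    · exact natDegree_zero.trans_le n.zero_le
    · refine le_trans (natDegree_le_of_dvd ?_ (mul_ne_zero hg0 hv0)) (hgv ▸ hv₀d)
      exact dvd_mul_left v g
  · rw [coeffVec_eq_coeffVec_iff, ← hgv, ← hgx, mul_left_comm, ← mul_sub] at hv₀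
    refine prime_X.pow_dvd_of_dvd_mul_left _ (fun hXg => ?_) hv₀
    refine hx₀z 0 (mem_ball_self one_pos) (dvd_iff_isRoot.1 ?_)
    rw [C_0, sub_zero, ← hgx]
    exact hXg.mul_right x

end CaratheodoryFejer

section WindingNumber

theorem exp_mul_I_mem_sphere (θ : ℝ) : Complex.exp (θ * Complex.I) ∈ sphere (0 : ℂ) 1 :=
  mem_sphere_zero_iff_norm.2 (Complex.norm_exp_ofReal_mul_I θ)

theorem hasWindingNumber_const (c : ℂ) : HasWindingNumber (fun _ => c) 0 :=
  ⟨fun _ => c.arg, continuous_const, fun _ => (Complex.norm_mul_exp_arg_mul_I c).symm, by simp⟩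

theorem hasWindingNumber_id : HasWindingNumber (fun z => z) 1 :=
  ⟨fun θ => θ, continuous_id, fun θ => by simp [Complex.norm_exp_ofReal_mul_I], by simp⟩

namespace HasWindingNumber

variable {g h : ℂ → ℂ} {m n : ℤ}

protected theorem congr (hg : HasWindingNumber g n) (hgh : Set.EqOn g h (sphere 0 1)) :
    HasWindingNumber h n := by
  obtain ⟨α, hα, hαg, hn⟩ := hg
  refine ⟨α, hα, fun θ => ?_, hn⟩
  rw [← hgh (exp_mul_I_mem_sphere θ)]
  exact hαg θ

protected theorem mul (hg : HasWindingNumber g m) (hh : HasWindingNumber h n) :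
    HasWindingNumber (fun z => g z * h z) (m + n) := by
  obtain ⟨α, hα, hαg, hm⟩ := hg
  obtain ⟨β, hβ, hβh, hn⟩ := hh
  refine ⟨α + β, hα.add hβ, fun θ => ?_, ?_⟩
  · beta_reduce
    rw [norm_mul, Pi.add_apply, Complex.ofReal_add, add_mul, Complex.exp_add]
    conv_lhs => rw [hαg θ, hβh θ]
    push_cast
    ring
  · simp only [Pi.add_apply, Int.cast_add]
    linear_combination hm + hn

protected theorem inv (hg : HasWindingNumber g m) : HasWindingNumber (fun z => (g z)⁻¹) (-m) := by
  obtain ⟨α, hα, hαg, hm⟩ := hg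
  refine ⟨-α, hα.neg, fun θ => ?_, ?_⟩
  · beta_reduce
    rw [norm_inv, Pi.neg_apply, Complex.ofReal_neg, neg_mul, Complex.exp_neg]
    conv_lhs => rw [hαg θ]
    rw [mul_inv, Complex.ofReal_inv]
  · simp only [Pi.neg_apply, Int.cast_neg]
    linear_combination -hm

protected theorem unique (hm : HasWindingNumber g m) (hn : HasWindingNumber g n)
    (hg : ∀ z ∈ sphere (0 : ℂ) 1, g z ≠ 0) : m = n := by
  obtain ⟨α, hα, hαg, hm⟩ := hm
  obtain ⟨β, hβ, hβg, hn⟩ := hn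
  have hsub : ∀ θ, ∃ k : ℤ, (k : ℝ) = (α θ - β θ) / (2 * Real.pi) := by
    intro θ
    have hnorm : (‖g (Complex.exp (θ * Complex.I))‖ : ℂ) ≠ 0 :=
      Complex.ofReal_ne_zero.2 (norm_ne_zero_iff.2 (hg _ (exp_mul_I_mem_sphere θ)))
    obtain ⟨k, hk⟩ := Complex.exp_eq_exp_iff_exists_int.1
      (mul_left_cancel₀ hnorm ((hαg θ).symm.trans (hβg θ)))
    have hk' : (α θ : ℂ) = β θ + k * (2 * Real.pi) :=
      mul_right_cancel₀ Complex.I_ne_zero (by linear_combination hk)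
    refine ⟨k, (eq_div_iff Real.two_pi_pos.ne').2 (eq_sub_of_add_eq' ?_)⟩
    exact_mod_cast hk'.symm
  choose k hk using hsub
  have hkc : Continuous k := by
    rw [Int.isClosedEmbedding_coe_real.isEmbedding.continuous_iff, Function.comp_def]
    simp_rw [hk]
    fun_prop
  have hk0 : k (2 * Real.pi) = k 0 := PreconnectedSpace.constant inferInstance hkc
  have hdiff : (α (2 * Real.pi) - β (2 * Real.pi)) / (2 * Real.pi) =
      (α 0 - β 0) / (2 * Real.pi) := by rw [← hk, ← hk, hk0]
  rw [div_left_inj' Real.two_pi_pos.ne'] at hdiff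
  have hmn : (m : ℝ) * (2 * Real.pi) = n * (2 * Real.pi) := by
    linear_combination hdiff - hm + hn
  exact_mod_cast mul_right_cancel₀ Real.two_pi_pos.ne' hmn

end HasWindingNumber

theorem hasWindingNumber_zero_of_norm_sub_one_lt {g : ℂ → ℂ} (hg : ContinuousOn g (sphere 0 1))
    (h : ∀ z ∈ sphere (0 : ℂ) 1, ‖g z - 1‖ < 1) : HasWindingNumber g 0 := by
  refine ⟨fun θ => (g (Complex.exp (θ * Complex.I))).arg, ?_,
    fun θ => (Complex.norm_mul_exp_arg_mul_I _).symm, by simp⟩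
  have hcont : Continuous fun θ : ℝ => g (Complex.exp (θ * Complex.I)) :=
    hg.comp_continuous (by fun_prop) exp_mul_I_mem_sphere
  refine continuous_iff_continuousAt.2 fun θ =>
    (Complex.continuousAt_arg (Or.inl ?_)).comp' hcont.continuousAt
  have hre := (Complex.abs_re_le_norm _).trans_lt (h _ (exp_mul_I_mem_sphere θ))
  rw [Complex.sub_re, Complex.one_re, abs_lt] at hre
  linarith

theorem HasWindingNumber.of_norm_sub_lt {g h : ℂ → ℂ} {n : ℤ} (hn : HasWindingNumber g n)
    (hg : ContinuousOn g (sphere 0 1)) (hh : ContinuousOn h (sphere 0 1))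
    (hgh : ∀ z ∈ sphere (0 : ℂ) 1, ‖h z - g z‖ < ‖g z‖) : HasWindingNumber h n := by
  have hg0 : ∀ z ∈ sphere (0 : ℂ) 1, g z ≠ 0 := fun z hz =>
    norm_pos_iff.1 ((norm_nonneg _).trans_lt (hgh z hz))
  have hdiv : HasWindingNumber (fun z => h z / g z) 0 := by
    refine hasWindingNumber_zero_of_norm_sub_one_lt (hh.div hg hg0) fun z hz => ?_
    rw [div_sub_one (hg0 z hz), norm_div, div_lt_one (norm_pos_iff.2 (hg0 z hz))]
    exact hgh z hz
  exact add_zero n ▸ (hn.mul hdiv).congr fun z hz => mul_div_cancel₀ _ (hg0 z hz)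

theorem hasWindingNumber_sub_const {a : ℂ} (ha : ‖a‖ ≠ 1) :
    HasWindingNumber (fun z => z - a) (if ‖a‖ < 1 then 1 else 0) := by
  split_ifs with h
  · refine hasWindingNumber_id.of_norm_sub_lt (by fun_prop) (by fun_prop) fun z hz => ?_
    rwa [sub_sub_cancel_left, norm_neg, mem_sphere_zero_iff_norm.1 hz]
  · refine (hasWindingNumber_const (-a)).of_norm_sub_lt (by fun_prop) (by fun_prop) fun z hz => ?_
    rw [sub_neg_eq_add, sub_add_cancel, norm_neg, mem_sphere_zero_iff_norm.1 hz]
    exact lt_of_le_of_ne (not_lt.1 h) ha.symm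

theorem hasWindingNumber_multiset_prod_sub (s : Multiset ℂ) (hs : ∀ a ∈ s, ‖a‖ ≠ 1) :
    HasWindingNumber (fun z => (s.map fun a => z - a).prod)
      (s.filter fun a => ‖a‖ < 1).card := by
  induction s using Multiset.induction_on with
  | empty => simpa using hasWindingNumber_const 1
  | cons a s ih =>
    have hprod := (hasWindingNumber_sub_const (hs a (Multiset.mem_cons_self a s))).mul
      (ih fun b hb => hs b (Multiset.mem_cons_of_mem hb))
    simp only [Multiset.map_cons, Multiset.prod_cons, Multiset.filter_cons]
    convert hprod using 1
    split_ifs <;> simp [add_comm]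

theorem hasWindingNumber_polynomial {Q : ℂ[X]} (hQ : ∀ z ∈ sphere (0 : ℂ) 1, Q.eval z ≠ 0) :
    HasWindingNumber (fun z => Q.eval z) (Q.roots.filter fun a => ‖a‖ < 1).card := by
  have hprod := (hasWindingNumber_const Q.leadingCoeff).mul
    (hasWindingNumber_multiset_prod_sub Q.roots fun a ha h =>
      hQ a (mem_sphere_zero_iff_norm.2 h) (isRoot_of_mem_roots ha))
  rw [zero_add] at hprod
  refine hprod.congr fun z _ => ?_
  conv_rhs => rw [(IsAlgClosed.splits Q).eq_prod_roots]
  simp [eval_multiset_prod, Multiset.map_map]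

theorem exists_neg_hasWindingNumber_div {n : ℕ} {v x : ℂ[X]} (hvd : v.natDegree ≤ n)
    (hv : ∀ z ∈ sphere (0 : ℂ) 1, v.eval z ≠ 0)
    (hx : ∀ z ∈ sphere (0 : ℂ) 1, (X ^ (n + 1) * x).eval z ≠ 0) :
    ∃ m < (0 : ℤ), HasWindingNumber (fun z => v.eval z / (X ^ (n + 1) * x).eval z) m := by
  refine ⟨_, ?_, (hasWindingNumber_polynomial hv).mul (hasWindingNumber_polynomial hx).inv⟩
  have hx0 : X ^ (n + 1) * x ≠ 0 := fun h => hx 1 (by simp) (by rw [h, eval_zero])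
  have hvcard : (v.roots.filter fun a => ‖a‖ < 1).card ≤ n :=
    (Multiset.card_le_card (Multiset.filter_le _ _)).trans ((card_roots' v).trans hvd)
  have hxcard : n + 1 ≤ ((X ^ (n + 1) * x).roots.filter fun a => ‖a‖ < 1).card := by
    rw [roots_mul hx0, Multiset.filter_add, Multiset.card_add, roots_X_pow,
      Multiset.filter_eq_self.2 (by simp [Multiset.mem_nsmul]), Multiset.card_nsmul,
      Multiset.card_singleton]
    lia
  lia

end WindingNumber

section UniformApproximation

open Filter
open scoped Topology

theorem exists_polynomial_norm_sub_lt_of_differentiableOn {F : ℂ → ℂ} {r R : ℝ} (hrR : r < R)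
    (hF : DifferentiableOn ℂ F (closedBall 0 R)) {ε : ℝ} (hε : 0 < ε) :
    ∃ P : ℂ[X], ∀ z ∈ closedBall (0 : ℂ) r, ‖F z - P.eval z‖ < ε := by
  rcases lt_or_ge r 0 with hr | hr
  · exact ⟨0, fun z hz => absurd hz (by simp [closedBall_eq_empty.2 hr])⟩
  lift R to NNReal using hr.trans hrR.le
  lift r to NNReal using hr
  obtain ⟨r', hr', hr'R⟩ := exists_between (NNReal.coe_lt_coe.1 hrR)
  have hseries := hF.hasFPowerSeriesOnBall (pos_of_gt hr'R)
  have hunif := hseries.tendstoUniformlyOn (ENNReal.coe_lt_coe.2 hr'R)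
  obtain ⟨n, hn⟩ := (tendstoUniformlyOn_iff.1 hunif ε hε).exists
  refine ⟨∑ k ∈ Finset.range n, C ((cauchyPowerSeries F 0 R).coeff k) * X ^ k, fun z hz => ?_⟩
  have hz' : z ∈ ball (0 : ℂ) r' := closedBall_subset_ball (NNReal.coe_lt_coe.2 hr') hz
  have hpartial : (cauchyPowerSeries F 0 R).partialSum n z =
      (∑ k ∈ Finset.range n, C ((cauchyPowerSeries F 0 R).coeff k) * X ^ k).eval z := by
    rw [FormalMultilinearSeries.partialSum, eval_finsetSum]
    refine Finset.sum_congr rfl fun k _ => ?_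
    rw [FormalMultilinearSeries.apply_eq_pow_smul_coeff, eval_C_mul, eval_X_pow, smul_eq_mul,
      mul_comm]
  rw [← hpartial, ← dist_eq_norm]
  simpa only [zero_add] using hn z hz'

theorem exists_polynomial_norm_sub_lt_of_diffContOnCl {F : ℂ → ℂ} {r : ℝ} (hr : 0 < r)
    (hF : DiffContOnCl ℂ F (ball 0 r)) {ε : ℝ} (hε : 0 < ε) :
    ∃ P : ℂ[X], ∀ z ∈ closedBall (0 : ℂ) r, ‖F z - P.eval z‖ < ε := by
  have hunif : UniformContinuousOn F (closedBall 0 r) :=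
    (isCompact_closedBall 0 r).uniformContinuousOn_of_continuous hF.continuousOn_ball
  obtain ⟨δ, hδ, hFδ⟩ := uniformContinuousOn_iff.1 hunif (ε / 2) (half_pos hε)
  have hδt : ∀ᶠ t : ℝ in 𝓝[<] 1, (1 - t) * r < δ :=
    (Continuous.tendsto' (by fun_prop) 1 0 (by ring)).eventually_lt_const hδ
      |>.filter_mono nhdsWithin_le_nhds
  obtain ⟨t, htδ, ht0, ht1⟩ := (hδt.and (Ioo_mem_nhdsLT zero_lt_one)).exists
  obtain ⟨R, hrR, hRt⟩ := exists_between ((lt_div_iff₀ ht0).2 (mul_lt_of_lt_one_right hr ht1))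
  have hdil : DifferentiableOn ℂ (fun z => F (t * z)) (closedBall 0 R) := by
    refine hF.differentiableOn.comp (by fun_prop) fun z hz => ?_
    rw [mem_ball_zero_iff, norm_mul, Complex.norm_of_nonneg ht0.le]
    exact (lt_div_iff₀' ht0).1 ((mem_closedBall_zero_iff.1 hz).trans_lt hRt)
  obtain ⟨P, hP⟩ := exists_polynomial_norm_sub_lt_of_differentiableOn hrR hdil (half_pos hε)
  refine ⟨P, fun z hz => ?_⟩
  have hzr : ‖z‖ ≤ r := mem_closedBall_zero_iff.1 hz
  have htz : (t : ℂ) * z ∈ closedBall 0 r := by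
    rw [mem_closedBall_zero_iff, norm_mul, Complex.norm_of_nonneg ht0.le]
    exact (mul_le_of_le_one_left (norm_nonneg z) ht1.le).trans hzr
  have hdist : dist z (t * z) < δ := by
    rw [dist_eq_norm, ← one_sub_mul, norm_mul, ← Complex.ofReal_one, ← Complex.ofReal_sub,
      Complex.norm_of_nonneg (sub_nonneg.2 ht1.le)]
    exact (mul_le_mul_of_nonneg_left hzr (sub_nonneg.2 ht1.le)).trans_lt htδ
  calc ‖F z - P.eval z‖ ≤ ‖F z - F (t * z)‖ + ‖F (t * z) - P.eval z‖ :=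
        norm_sub_le_norm_sub_add_norm_sub ..
    _ < ε / 2 + ε / 2 := add_lt_add (dist_eq_norm (F z) _ ▸ hFδ z hz _ htz hdist) (hP z hz)
    _ = ε := add_halves ε

theorem exists_polynomial_norm_eval_div_sub_lt (r : ℂ[X]) {x : ℂ[X]}
    (hx : ∀ z ∈ closedBall (0 : ℂ) 1, x.eval z ≠ 0) {ε : ℝ} (hε : 0 < ε) :
    ∃ P : ℂ[X], ∀ z ∈ closedBall (0 : ℂ) 1, ‖r.eval z / x.eval z - P.eval z‖ < ε := by
  have hrx : DiffContOnCl ℂ (fun z => r.eval z / x.eval z) (ball 0 1) := by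
    simp only [div_eq_mul_inv]
    refine r.differentiable.diffContOnCl.smul (x.differentiable.diffContOnCl.inv ?_)
    rwa [closure_ball (0 : ℂ) one_ne_zero]
  exact exists_polynomial_norm_sub_lt_of_diffContOnCl one_pos hrx hε

theorem exists_diffContOnCl_eqOn_frontier {ι E : Type*} [NormedAddCommGroup E] [NormedSpace ℂ E]
    [CompleteSpace E] {l : Filter ι} [l.NeBot] {U : Set ℂ} {F : ι → ℂ → E} {f : ℂ → E}
    (hU : IsOpen U) (hUb : Bornology.IsBounded U) (hF : ∀ i, DiffContOnCl ℂ (F i) U)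
    (hf : TendstoUniformlyOn F f l (frontier U)) :
    ∃ G : ℂ → E, DiffContOnCl ℂ G U ∧ Set.EqOn G f (frontier U) := by
  have hcauchy : UniformCauchySeqOn F l (closure U) := by
    intro u hu
    obtain ⟨ε, hε, hεu⟩ := mem_uniformity_dist.1 hu
    filter_upwards [hf.uniformCauchySeqOn _ (dist_mem_uniformity (half_pos hε))] with i hi z hz
    refine hεu ((dist_eq_norm _ _).trans_lt (lt_of_le_of_lt ?_ (half_lt_self hε)))
    refine Complex.norm_le_of_forall_mem_frontier_norm_le hUb ((hF i.1).sub (hF i.2))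
      (fun w hw => ?_) hz
    exact (dist_eq_norm (F i.1 w) _).symm.trans_le (hi w hw).le
  have hlim : ∀ z ∈ closure U, ∃ w, Tendsto (fun i => F i z) l (𝓝 w) := fun z hz =>
    CompleteSpace.complete (hcauchy.cauchy_map hz)
  choose! G hG using hlim
  have hunif := hcauchy.tendstoUniformlyOn_of_tendsto hG
  refine ⟨G, ⟨?_, hunif.continuousOn (.of_forall fun i => (hF i).continuousOn)⟩, fun z hz =>
    tendsto_nhds_unique (hG z (frontier_subset_closure hz)) (hf.tendsto_at hz)⟩
  exact (hunif.mono subset_closure).tendstoLocallyUniformlyOn.differentiableOn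
    (.of_forall fun i => (hF i).differentiableOn) hU

theorem extendsHolo_iff_exists_diffContOnCl {f : ℂ → ℂ} :
    ExtendsHolo f ↔ ∃ F, DiffContOnCl ℂ F (ball 0 1) ∧ Set.EqOn F f (sphere 0 1) :=
  ⟨fun ⟨F, hc, hd, hf⟩ => ⟨F, .mk_ball hd hc, hf⟩,
    fun ⟨F, hF, hf⟩ => ⟨F, hF.continuousOn_ball, hF.differentiableOn, hf⟩⟩

theorem extendsHolo_iff_forall_exists_polynomial {f : ℂ → ℂ} :
    ExtendsHolo f ↔ ∀ ε > 0, ∃ P : ℂ[X], ∀ z ∈ sphere (0 : ℂ) 1, ‖f z - P.eval z‖ < ε := by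
  rw [extendsHolo_iff_exists_diffContOnCl]
  constructor
  · rintro ⟨F, hF, hf⟩ ε hε
    obtain ⟨P, hP⟩ := exists_polynomial_norm_sub_lt_of_diffContOnCl one_pos hF hε
    exact ⟨P, fun z hz => hf hz ▸ hP z (sphere_subset_closedBall hz)⟩
  · intro h
    choose! P hP using h
    have hunif : TendstoUniformlyOn (fun ε z => (P ε).eval z) f (𝓝[>] 0) (sphere 0 1) := by
      refine tendstoUniformlyOn_iff.2 fun ε hε => ?_
      filter_upwards [Ioo_mem_nhdsGT hε] with δ hδ z hz
      exact (dist_eq_norm _ _).trans_lt ((hP δ hδ.1 z hz).trans hδ.2)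
    rw [← frontier_ball (0 : ℂ) one_ne_zero] at hunif ⊢
    exact exists_diffContOnCl_eqOn_frontier isOpen_ball isBounded_ball
      (fun ε => (P ε).differentiable.diffContOnCl) hunif

theorem exists_mul_pow_eq_eval_of_mem_starClosure {g : C(sphere (0 : ℂ) 1, ℂ)}
    (hg : g ∈ (polynomialFunctions (sphere (0 : ℂ) 1)).starClosure) :
    ∃ (n : ℕ) (p : ℂ[X]), ∀ z, g z * (z : ℂ) ^ n = p.eval (z : ℂ) := by
  rw [polynomialFunctions.starClosure_eq_adjoin_X, ← StarSubalgebra.mem_toSubalgebra,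
    StarAlgebra.adjoin_toSubalgebra] at hg
  induction hg using Algebra.adjoin_induction with
  | mem g hg =>
    rw [Set.star_singleton] at hg
    rcases hg with rfl | rfl
    · exact ⟨0, X, fun z => by simp⟩
    · exact ⟨1, 1, fun z => by simp [Complex.conj_mul']⟩
  | algebraMap c => exact ⟨0, C c, fun z => by simp⟩
  | add g h _ _ hg hh =>
    obtain ⟨m, p, hp⟩ := hg
    obtain ⟨n, q, hq⟩ := hh
    refine ⟨m + n, p * X ^ n + q * X ^ m, fun z => ?_⟩
    simp only [eval_add, eval_mul, eval_pow, eval_X, ← hp, ← hq, ContinuousMap.add_apply]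
    ring
  | mul g h _ _ hg hh =>
    obtain ⟨m, p, hp⟩ := hg
    obtain ⟨n, q, hq⟩ := hh
    refine ⟨m + n, p * q, fun z => ?_⟩
    simp only [eval_mul, ← hp, ← hq, ContinuousMap.mul_apply]
    ring

theorem exists_norm_sub_eval_div_pow_lt {f : ℂ → ℂ} (hf : ContinuousOn f (sphere 0 1)) {ε : ℝ}
    (hε : 0 < ε) :
    ∃ (n : ℕ) (p : ℂ[X]), ∀ z ∈ sphere (0 : ℂ) 1, ‖f z - p.eval z / z ^ n‖ < ε := by
  let φ : C(sphere (0 : ℂ) 1, ℂ) := ⟨_, hf.domRestrict⟩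
  have hφ : φ ∈ (polynomialFunctions (sphere (0 : ℂ) 1)).starClosure.topologicalClosure := by
    rw [polynomialFunctions.starClosure_topologicalClosure]
    exact StarSubalgebra.mem_top
  rw [← SetLike.mem_coe, StarSubalgebra.topologicalClosure_coe] at hφ
  obtain ⟨g, hg, hφg⟩ := mem_closure_iff.1 hφ ε hε
  obtain ⟨n, p, hp⟩ := exists_mul_pow_eq_eval_of_mem_starClosure hg
  refine ⟨n, p, fun z hz => ?_⟩
  rw [← hp ⟨z, hz⟩, mul_div_cancel_right₀ _ (pow_ne_zero n (ne_of_mem_sphere hz one_ne_zero)),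
    ← dist_eq_norm]
  exact (ContinuousMap.dist_apply_le_dist (f := φ) (g := g) ⟨z, hz⟩).trans_lt hφg

end UniformApproximation

theorem ne_zero_of_norm_sub_lt_norm {E : Type*} [SeminormedAddCommGroup E] {u w : E}
    (h : ‖w - u‖ < ‖u‖) : w ≠ 0 := by
  rintro rfl
  rw [zero_sub, norm_neg] at h
  exact h.false

namespace ExtendsHolo

variable {f : ℂ → ℂ}

theorem continuousOn_sphere (hf : ExtendsHolo f) : ContinuousOn f (sphere 0 1) := by
  obtain ⟨F, hFc, -, hFf⟩ := hf
  exact (hFc.mono sphere_subset_closedBall).congr fun z hz => (hFf z hz).symm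

theorem add_polynomial (hf : ExtendsHolo f) (P : ℂ[X]) : ExtendsHolo fun z => f z + P.eval z := by
  obtain ⟨F, hFc, hFd, hFf⟩ := hf
  exact ⟨fun z => F z + P.eval z, hFc.add P.continuousOn,
    hFd.add P.differentiable.differentiableOn, fun z hz => congrArg (· + P.eval z) (hFf z hz)⟩

theorem nonneg_of_hasWindingNumber (hf : ExtendsHolo f) (hf0 : ∀ z ∈ sphere (0 : ℂ) 1, f z ≠ 0)
    {n : ℤ} (hn : HasWindingNumber f n) : 0 ≤ n := by
  obtain ⟨w, hw, hmin⟩ := (isCompact_sphere (0 : ℂ) 1).exists_isMinOn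
    (NormedSpace.sphere_nonempty.2 zero_le_one) hf.continuousOn_sphere.norm
  obtain ⟨Q, hQ⟩ :=
    extendsHolo_iff_forall_exists_polynomial.1 hf ‖f w‖ (norm_pos_iff.2 (hf0 w hw))
  have hlt : ∀ z ∈ sphere (0 : ℂ) 1, ‖Q.eval z - f z‖ < ‖f z‖ := fun z hz =>
    norm_sub_rev (f z) _ ▸ (hQ z hz).trans_le (hmin hz)
  have hQ0 : ∀ z ∈ sphere (0 : ℂ) 1, Q.eval z ≠ 0 := fun z hz =>
    ne_zero_of_norm_sub_lt_norm (hlt z hz)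
  have hnQ := hn.of_norm_sub_lt hf.continuousOn_sphere Q.continuousOn hlt
  rw [hnQ.unique (hasWindingNumber_polynomial hQ0) hQ0]
  positivity

end ExtendsHolo

theorem eval_div_pow_add_eval_div_eq {K : Type*} [Field K] {n : ℕ} {p r v x : K[X]}
    (h : v - X * p * x = X ^ (n + 1) * r) {z : K} (hz : z ≠ 0) (hx : x.eval z ≠ 0) :
    p.eval z / z ^ n + r.eval z / x.eval z = v.eval z / (X ^ (n + 1) * x).eval z := by
  have hv : v.eval z = z * p.eval z * x.eval z + z ^ (n + 1) * r.eval z := by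
    simpa using congrArg (eval z) (sub_eq_iff_eq_add'.1 h)
  rw [hv, eval_mul, eval_pow, eval_X]
  field_simp
  ring

theorem exists_norm_eq_norm_add_polynomial_sub_lt {f : ℂ → ℂ} (hf : ContinuousOn f (sphere 0 1))
    {ε : ℝ} (hε : 0 < ε) :
    ∃ (P : ℂ[X]) (B : ℂ → ℂ) (s : ℝ), ContinuousOn B (sphere 0 1) ∧
      (∀ z ∈ sphere (0 : ℂ) 1, ‖B z‖ = s) ∧ (s ≠ 0 → ∃ m < (0 : ℤ), HasWindingNumber B m) ∧
      ∀ z ∈ sphere (0 : ℂ) 1, ‖f z + P.eval z - B z‖ < ε := by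
  obtain ⟨n, p, hp⟩ := exists_norm_sub_eval_div_pow_lt hf (half_pos hε)
  obtain ⟨s, x, v, hx, hvd, ⟨r, hr⟩, hnorm⟩ := caratheodory_fejer n (X * p)
  obtain ⟨P, hP⟩ := exists_polynomial_norm_eval_div_sub_lt r hx (half_pos hε)
  have hz0 : ∀ z ∈ sphere (0 : ℂ) 1, z ≠ 0 := fun z hz => ne_of_mem_sphere hz one_ne_zero
  have hx0 : ∀ z ∈ sphere (0 : ℂ) 1, x.eval z ≠ 0 := fun z hz => hx z (sphere_subset_closedBall hz)
  have hden : ∀ z ∈ sphere (0 : ℂ) 1, (X ^ (n + 1) * x).eval z ≠ 0 := fun z hz => by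
    simpa using ⟨hz0 z hz, hx0 z hz⟩
  let B : ℂ → ℂ := fun z => v.eval z / (X ^ (n + 1) * x).eval z
  have hB : ContinuousOn B (sphere 0 1) :=
    v.continuousOn.div (X ^ (n + 1) * x).continuousOn hden
  refine ⟨P, B, s, hB, fun z hz => ?_, fun hs => ?_, fun z hz => ?_⟩
  · rw [norm_div, hnorm z hz, eval_mul, norm_mul, eval_pow, eval_X, norm_pow,
      mem_sphere_zero_iff_norm.1 hz, one_pow, one_mul,
      mul_div_cancel_right₀ _ (norm_ne_zero_iff.2 (hx0 z hz))]
  · refine exists_neg_hasWindingNumber_div hvd (fun z hz => norm_ne_zero_iff.1 ?_) hden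
    rw [hnorm z hz]
    exact mul_ne_zero hs (norm_ne_zero_iff.2 (hx0 z hz))
  · have hBz : p.eval z / z ^ n + r.eval z / x.eval z = B z :=
      eval_div_pow_add_eval_div_eq hr (hz0 z hz) (hx0 z hz)
    rw [← hBz]
    calc ‖f z + P.eval z - (p.eval z / z ^ n + r.eval z / x.eval z)‖
        = ‖(f z - p.eval z / z ^ n) - (r.eval z / x.eval z - P.eval z)‖ := by ring_nf
      _ ≤ ‖f z - p.eval z / z ^ n‖ + ‖r.eval z / x.eval z - P.eval z‖ := norm_sub_le _ _
      _ < ε / 2 + ε / 2 := add_lt_add (hp z hz) (hP z (sphere_subset_closedBall hz))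
      _ = ε := add_halves ε

theorem stmt7 (f : ℂ → ℂ) (hf : ContinuousOn f (sphere (0:ℂ) 1)) :
    ExtendsHolo f ↔
      ∀ P : Polynomial ℂ, (∀ z ∈ sphere (0:ℂ) 1, f z + P.eval z ≠ 0) →
        ∀ n : ℤ, HasWindingNumber (fun z => f z + P.eval z) n → 0 ≤ n := by
  refine ⟨fun hext P hP n hn => (hext.add_polynomial P).nonneg_of_hasWindingNumber hP hn,
    fun hwind => extendsHolo_iff_forall_exists_polynomial.2 fun ε hε => ?_⟩
  obtain ⟨P, B, s, hB, hBs, hneg, hfB⟩ :=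
    exists_norm_eq_norm_add_polynomial_sub_lt hf (half_pos hε)
  have hs : s ≤ ε / 2 := by
    by_contra! hεs
    obtain ⟨m, hm, hBm⟩ := hneg ((half_pos hε).trans hεs).ne'
    have hlt : ∀ z ∈ sphere (0 : ℂ) 1, ‖f z + P.eval z - B z‖ < ‖B z‖ := fun z hz =>
      hBs z hz ▸ (hfB z hz).trans hεs
    exact hm.not_ge <| hwind P (fun z hz => ne_zero_of_norm_sub_lt_norm (hlt z hz)) m <|
      hBm.of_norm_sub_lt hB (hf.add P.continuousOn) hlt
  refine ⟨-P, fun z hz => ?_⟩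
  calc ‖f z - (-P).eval z‖ = ‖(f z + P.eval z - B z) + B z‖ := by simp
    _ ≤ ‖f z + P.eval z - B z‖ + ‖B z‖ := norm_add_le _ _
    _ < ε / 2 + ε / 2 := add_lt_add_of_lt_of_le (hfB z hz) ((hBs z hz).trans_le hs)
    _ = ε := add_halves ε
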